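/- Let q be even, let d ≥ 4 be a power of 2, and let n = d²−1. Let a ∈ F_{q^n} with N_{q^n/q}(a) = 1 and set b = (∏_{i=1}^{d−1} a^{q^{id}})^{−1}. Then the polynomial x^{q^d} − b·x^q − a·x divides x^{q^n} − x in F_{q^n}[x]; in particular, it is a quasi-subfield polynomial (it splits completely over F_{q^n} and log_q of the degree of b·x^q + a·x equals 1 < d²/n). -/

import Mathlib

lemma aux_double {R : Type*} [CommRing R] [CharP R 2] (t q d : ℕ) (hq : q = 2 ^ t) (s : R)
    (hs : s ^ q ^ d = s ^ q + s) (k : ℕ) :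
    s ^ q ^ (d * 2 ^ k) = s ^ q ^ (2 ^ k) + s := by
  have hadd : ∀ (x y : R) (j : ℕ), (x + y) ^ q ^ j = x ^ q ^ j + y ^ q ^ j := by
    intro x y j
    have : Fact (Nat.Prime 2) := ⟨Nat.prime_two⟩
    rw [hq, ← pow_mul]
    exact add_pow_char_pow x y 2 _
  have h2 : ∀ x : R, x + x = 0 := fun x => CharTwo.add_self_eq_zero x
  induction k with
  | zero => simpa using hs
  | succ k ih =>
    have e1 : q ^ (d * 2 ^ (k + 1)) = q ^ (d * 2 ^ k) * q ^ (d * 2 ^ k) := by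
      rw [← pow_add]; congr 1; ring
    have e2 : q ^ (2 ^ (k + 1)) = q ^ (2 ^ k) * q ^ (2 ^ k) := by
      rw [← pow_add]; congr 1; ring
    rw [e1, e2, pow_mul, ih, hadd, ← pow_mul, mul_comm (q ^ 2 ^ k), pow_mul, ih, hadd, ← pow_mul]
    linear_combination h2 (s ^ q ^ 2 ^ k)

lemma exists_u {L : Type*} [Field L] [Fintype L] (q d n : ℕ) (hq : 2 ≤ q) (hd : 4 ≤ d)
    (hn : n + 1 = d * d) (hcardL : Fintype.card L = q ^ n) (a : L)
    (ha : a ^ ((q ^ n - 1) / (q - 1)) = 1) :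
    ∃ u : L, u ≠ 0 ∧ u ^ q ^ d = a * u := by
  classical
  obtain ⟨M, hM⟩ : (q - 1) ∣ q ^ n - 1 := by simpa using Nat.sub_dvd_pow_sub_pow q 1 n
  have hn0 : n ≠ 0 := by rintro rfl; nlinarith
  have hqn : 2 ≤ q ^ n := hq.trans (Nat.le_self_pow hn0 q)
  have hM0 : M ≠ 0 := by rintro rfl; omega
  rw [hM, Nat.mul_div_cancel_left _ (by omega)] at ha
  have ha0 : a ≠ 0 := by rintro rfl; simp [hM0] at ha
  obtain ⟨g, hg⟩ := IsCyclic.exists_generator (α := Lˣ)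
  have hord : orderOf g = (q - 1) * M := by
    rw [orderOf_eq_card_of_forall_mem_zpowers hg, Nat.card_eq_fintype_card, Fintype.card_units,
      hcardL, hM]
  obtain ⟨k, hk⟩ : ∃ k : ℕ, g ^ k = Units.mk0 a ha0 :=
    (mem_powers_iff_mem_zpowers.mpr (hg (Units.mk0 a ha0)))
  have h1 : g ^ (k * M) = 1 := by
    rw [pow_mul, hk]; ext; simpa using ha
  have h2 := orderOf_dvd_of_pow_eq_one h1
  rw [hord] at h2
  obtain ⟨j, rfl⟩ := Nat.dvd_of_mul_dvd_mul_right (Nat.pos_of_ne_zero hM0) h2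
  set v : L := (g : L) ^ j with hv
  have hv0 : v ≠ 0 := by simp [hv]
  have hva : v ^ (q - 1) = a := by
    have := congrArg Units.val hk
    simp only [Units.val_pow_eq_pow_val, Units.val_mk0] at this
    rw [← this, hv, ← pow_mul, mul_comm]
  have hvN : v ^ q ^ n = v := by rw [← hcardL]; exact FiniteField.pow_card v
  set S := ∑ i ∈ Finset.range d, (q ^ d) ^ i with hS
  have hgeom : S * q ^ d + 1 = S + q ^ (n + 1) := by
    have h := geom_sum_mul_add (q ^ d - 1) d
    have e : q ^ d - 1 + 1 = q ^ d := Nat.sub_add_cancel (Nat.one_le_pow _ _ (by omega))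
    rw [e, ← hS, ← pow_mul, ← hn] at h
    have : S * q ^ d = S * (q ^ d - 1) + S := by
      conv_lhs => rw [← e]
      ring
    omega
  refine ⟨v ^ S, pow_ne_zero _ hv0, ?_⟩
  have h3 : v ^ (S * q ^ d) * v = v ^ S * v ^ q := by
    rw [← pow_succ, hgeom, pow_add, pow_succ q, pow_mul, hvN]
  have h4 : v ^ q = a * v := by
    rw [← hva, ← pow_succ]; congr 1; omega
  rw [← pow_mul]
  apply mul_right_cancel₀ hv0
  rw [h3, h4]; ring

lemma prod_tel {L : Type*} [Field L] (q d : ℕ) (a u : L) (h : u ^ q ^ d = a * u) (k : ℕ) :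
    (∏ i ∈ Finset.Icc 1 k, a ^ q ^ (i * d)) * u ^ q ^ d = u ^ q ^ ((k + 1) * d) := by
  induction k with
  | zero => simp
  | succ k ih =>
    rw [Finset.prod_Icc_succ_top (by omega), mul_right_comm, ih, mul_comm, ← mul_pow, ← h,
      ← pow_mul, ← pow_add]
    congr 2; ring


open Polynomial in
/-- (Proposition `quasisubfield`.) Let `q` be even, `d ≥ 4` a power of
`2`, `n = d² - 1`. If `a ∈ F_{q^n}` has `N_{q^n/q}(a) = 1` and
`b = (∏_{i=1}^{d-1} a^{q^{id}})⁻¹`, then `x^{q^d} − b·x^q − a·x` divides `x^{q^n} − x` in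
`F_{q^n}[x]`; in particular it splits completely over `F_{q^n}` and
`log_q(deg(b·x^q + a·x)) = 1 < d²/n` (i.e. `n < d²`), so it is a quasi-subfield
polynomial. -/
theorem stmt_17 (p q : ℕ) (hp : p.Prime) (hq : ∃ m : ℕ, 0 < m ∧ q = p ^ m)
    (hqeven : Even q)
    (K L : Type*) [Field K] [Field L] [Fintype K] [Fintype L] [Algebra K L]
    (hcardK : Fintype.card K = q)
    (d : ℕ) (hd : 4 ≤ d) (hd2 : ∃ m : ℕ, d = 2 ^ m)
    (n : ℕ) (hnval : n = d ^ 2 - 1) (hcardL : Fintype.card L = q ^ n)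
    (a b : L) (ha : a ^ ((q ^ n - 1) / (q - 1)) = 1)
    (hb : b = (∏ i ∈ Finset.Icc 1 (d - 1), a ^ q ^ (i * d))⁻¹) :
    ((X : L[X]) ^ q ^ d - C b * X ^ q - C a * X) ∣ ((X : L[X]) ^ q ^ n - X)
      ∧ Polynomial.Splits (((X : L[X]) ^ q ^ d - C b * X ^ q - C a * X).map (RingHom.id L))
      ∧ n < d ^ 2 := by
  classical
  obtain ⟨t₀, ht₀, hqp⟩ := hq
  have hp2 : p = 2 := by
    rw [hqp] at hqeven
    have := (Nat.even_pow.mp hqeven).1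
    exact (hp.even_iff).mp this
  subst hp2
  have hq2 : 2 ≤ q := by rw [hqp]; exact Nat.le_self_pow ht₀.ne' 2
  have hn1 : n + 1 = d * d := by
    have : 1 ≤ d ^ 2 := Nat.one_le_pow _ _ (by omega)
    rw [hnval, Nat.sub_add_cancel this, sq]
  have hn0 : n ≠ 0 := by rintro rfl; nlinarith
  have hlt : n < d ^ 2 := by rw [sq]; omega
  have : Fact (Nat.Prime 2) := ⟨Nat.prime_two⟩
  have hchar : CharP L 2 := by
    apply charP_of_card_eq_prime_pow (f := t₀ * n)
    rw [hcardL, hqp, ← pow_mul]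
  obtain ⟨u, hu0, hu⟩ := exists_u q d n hq2 hd hn1 hcardL a ha
  have huN : u ^ q ^ n = u := by rw [← hcardL]; exact FiniteField.pow_card u
  have ha0 : a ≠ 0 := by
    rintro rfl
    rw [zero_mul] at hu
    exact hu0 (pow_eq_zero_iff (pow_ne_zero _ (by omega)) |>.mp hu)
  have hbu : b * u ^ q = u ^ q ^ d := by
    have h := prod_tel q d a u hu (d - 1)
    rw [Nat.sub_add_cancel (by omega), ← hn1, pow_succ, pow_mul, huN] at h
    rw [hb, ← h, inv_mul_cancel_left₀]
    rw [Finset.prod_ne_zero_iff]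
    intro i _
    exact pow_ne_zero _ ha0
  set P : L[X] := X ^ q ^ d - C b * X ^ q - C a * X with hP
  have hqL : (q : L) = 0 := by
    rw [hqp]; push_cast
    rw [show (2 : L) = 0 from CharTwo.two_eq_zero, zero_pow ht₀.ne']
  have hder : derivative P = C (-a) := by
    rw [hP]
    simp [derivative_X_pow, hqL, show d ≠ 0 by omega]
  have hsep : P.Separable := by
    rw [Polynomial.separable_def, hder]
    exact (isCoprime_one_right).of_isCoprime_of_dvd_right
      ((Polynomial.isUnit_C.mpr (neg_ne_zero.mpr ha0).isUnit).dvd)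
  have hsq := hsep.squarefree
  have hdvd : P ∣ X ^ q ^ n - X := by
    by_cases hunit : IsUnit P
    · exact hunit.dvd
    have : Nontrivial (AdjoinRoot P) := Ideal.Quotient.nontrivial_iff.mpr (by
      rwa [Ne, Ideal.span_singleton_eq_top])
    have : CharP (AdjoinRoot P) 2 :=
      charP_of_injective_algebraMap (algebraMap L (AdjoinRoot P)).injective 2
    set r := AdjoinRoot.root P with hr
    set φ := AdjoinRoot.of P with hφ
    have hroot : r ^ q ^ d = φ b * r ^ q + φ a * r := by
      have h := AdjoinRoot.eval₂_root P
      rw [hP] at h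
      simp only [eval₂_sub, eval₂_mul, eval₂_pow, eval₂_X, eval₂_C] at h
      linear_combination h
    have hs : (φ u⁻¹ * r) ^ q ^ d = (φ u⁻¹ * r) ^ q + φ u⁻¹ * r := by
      have e1 : u⁻¹ ^ q ^ d * b = u⁻¹ ^ q := by
        rw [inv_pow, inv_pow, ← hbu]
        have : u ^ q ≠ 0 := pow_ne_zero _ hu0
        have : b ≠ 0 := by
          rintro rfl
          rw [zero_mul] at hbu
          exact pow_ne_zero _ hu0 hbu.symm
        field_simp
      have e2 : u⁻¹ ^ q ^ d * a = u⁻¹ := by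
        rw [inv_pow, hu]
        field_simp
      rw [mul_pow, hroot, mul_pow, ← map_pow, ← map_pow]
      have e1' := congrArg φ e1
      have e2' := congrArg φ e2
      rw [map_mul] at e1' e2'
      linear_combination r ^ q * e1' + r * e2'
    obtain ⟨m, hm⟩ := hd2
    have hdd := aux_double t₀ q d hqp _ hs m
    rw [← hm, hs, ← hn1, add_assoc, CharTwo.add_self_eq_zero, add_zero, pow_succ q, pow_mul,
      mul_pow (φ u⁻¹), ← map_pow, inv_pow, huN] at hdd
    have hfin : (r ^ q ^ n) ^ q = r ^ q := by
      have hc : φ u * φ u⁻¹ = 1 := by rw [← map_mul, mul_inv_cancel₀ hu0, map_one]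
      have := congrArg (fun x => φ u ^ q * x) hdd
      simpa only [← mul_pow, ← mul_assoc, hc, one_mul] using this
    have h0 : AdjoinRoot.mk P ((X ^ q ^ n - X) ^ q) = 0 := by
      simp only [map_pow, map_sub, AdjoinRoot.mk_X]
      rw [← hr, hqp, sub_pow_char_pow, ← hqp, hfin, sub_self]
    exact (hsq.dvd_pow_iff_dvd (by omega)).mp (AdjoinRoot.mk_eq_zero.mp h0)
  refine ⟨hdvd, ?_, hlt⟩
  rw [Polynomial.map_id]
  have hspl : (X ^ q ^ n - X : L[X]).Splits := by
    rw [← hcardL, splits_iff_card_roots, FiniteField.roots_X_pow_card_sub_X,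
      FiniteField.X_pow_card_sub_X_natDegree_eq L Fintype.one_lt_card]
    rfl
  exact hspl.of_dvd (FiniteField.X_pow_card_sub_X_ne_zero L (by rw [← hcardL]; exact Fintype.one_lt_card)) hdvd
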